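/- arXiv:2509.20255 — 2 statements merged into one kernel-verified Lean document; each statement's English description precedes it below -/
import Mathlib

section
/- Let k ≥ 1, r ≥ 2k+1 and n ≥ 3k+1 be integers, let A be an r×n sign matrix, and let P be a plain travel of A. If P makes a downward move from row r−2k to row r−2k+1 at a column j ≤ n−3k, then P is not k-neighborly. -/
/-- An `r × n` sign matrix: entries in `{+1, -1}` (1-indexed: `1 ≤ i ≤ r`, `1 ≤ j ≤ n`). -/
def IsSignMatrix (r n : ℕ) (A : ℕ → ℕ → ℤ) : Prop :=
  ∀ i j, 1 ≤ i → i ≤ r → 1 ≤ j → j ≤ n → A i j = 1 ∨ A i j = -1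

/-- `A_S`: the matrix obtained from `A` by negating every entry of each column in `S`. -/
def reorient (A : ℕ → ℕ → ℤ) (S : Finset ℕ) : ℕ → ℕ → ℤ :=
  fun i j => if j ∈ S then -A i j else A i j

/-- The first column `c'` with `c < c' ≤ n` where row `i` changes sign relative to
entry `a_{i,c}`, if such a column exists. -/
def rowChange (A : ℕ → ℕ → ℤ) (n i c : ℕ) : Option ℕ :=
  (List.range (n + 1)).find? fun c' => decide (c < c' ∧ A i c' ≠ A i c)

/-- `ttEntry A n i` is the column at which the top travel of `A` enters row `i`
(rows and columns 1-indexed): the travel enters row 1 at column 1, and, having entered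
row `i` at column `c`, it enters row `i+1` at the first sign change of row `i` after
column `c` (if any).  The value `some` at the "virtual" row `r+1` means the top travel
had a sign change in the bottom row `r`, i.e. the top travel is positive. -/
def ttEntry (A : ℕ → ℕ → ℤ) (n : ℕ) : ℕ → Option ℕ
  | 0 => none
  | 1 => some 1
  | i + 2 => (ttEntry A n (i + 1)).bind (rowChange A n (i + 1))

/-- The top travel of the `r × n` sign matrix `A` is positive: it contains two
horizontally consecutive entries of row `r` with opposite signs. -/
def ttPositive (A : ℕ → ℕ → ℤ) (r n : ℕ) : Prop :=
  (ttEntry A n (r + 1)).isSome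

/-- `A` is `k`-neighborly: for every set `S` of at most `k` columns, the top travel
of `A_S` is not positive. -/
def IsNeighborly (A : ℕ → ℕ → ℤ) (r n k : ℕ) : Prop :=
  ∀ S : Finset ℕ, S ⊆ Finset.Icc 1 n → S.card ≤ k → ¬ ttPositive (reorient A S) r n

/-- A plain travel of an `r × n` sign matrix, identified with the set `D` of columns of
its downward (vertical) moves: the columns `2 ≤ j₁ < ⋯ < j_{s-1} ≤ n` with `s ≤ r`. -/
def IsPlainTravel (r n : ℕ) (D : Finset ℕ) : Prop :=
  D ⊆ Finset.Icc 2 n ∧ D.card ≤ r - 1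

/-- The top travel of `A` follows exactly the plain travel with downward-move columns `D`:
it makes its downward moves precisely at the columns of `D` (entering rows `2, …, |D|+1`
there) and then ends at column `n` in row `|D|+1` without a further sign change. -/
def ttFollows (A : ℕ → ℕ → ℤ) (n : ℕ) (D : Finset ℕ) : Prop :=
  ttEntry A n (D.card + 2) = none ∧
  ∀ c, c ∈ D ↔ ∃ i, 2 ≤ i ∧ i ≤ D.card + 1 ∧ ttEntry A n i = some c

/-- The plain travel `D` of `A` is `k`-neighborly: there is a set `R` of columns such that
the top travel of `A_R` follows exactly the path `D` and `A_R` is a `k`-neighborly matrix. -/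
def IsNeighborlyTravel (A : ℕ → ℕ → ℤ) (r n k : ℕ) (D : Finset ℕ) : Prop :=
  ∃ R : Finset ℕ, R ⊆ Finset.Icc 1 n ∧ ttFollows (reorient A R) n D ∧
    IsNeighborly (reorient A R) r n k

theorem rowChange_iff (A : ℕ → ℕ → ℤ) (n i c c' : ℕ) :
    rowChange A n i c = some c' ↔
      c < c' ∧ c' ≤ n ∧ A i c' ≠ A i c ∧ ∀ x, c < x → x < c' → A i x = A i c := by
  unfold rowChange
  rw [List.find?_range_eq_some]
  simp only [decide_eq_true_eq, List.mem_range, Bool.not_eq_true', decide_eq_false_iff_not,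
    not_and, not_not]
  constructor
  · rintro ⟨⟨h1, h2⟩, h3, h4⟩
    exact ⟨h1, by omega, h2, fun x hx hx' => h4 x hx' hx⟩
  · rintro ⟨h1, h2, h3, h4⟩
    exact ⟨⟨h1, h3⟩, by omega, fun x hx hx' => h4 x hx' hx⟩

theorem ttEntry_succ_iff (A : ℕ → ℕ → ℤ) (n i c' : ℕ) (hi : 1 ≤ i) :
    ttEntry A n (i + 1) = some c' ↔ ∃ c, ttEntry A n i = some c ∧
      c < c' ∧ c' ≤ n ∧ A i c' ≠ A i c ∧ ∀ x, c < x → x < c' → A i x = A i c := by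
  obtain ⟨m, rfl⟩ : ∃ m, i = m + 1 := ⟨i - 1, by omega⟩
  simp only [ttEntry, Option.bind_eq_some_iff, rowChange_iff]

theorem ttEntry_congr (A B : ℕ → ℕ → ℤ) (n i : ℕ) (hi : 1 ≤ i) :
    ∀ c, ttEntry A n i = some c → (∀ i' x, x ≤ c → B i' x = A i' x) →
      ttEntry B n i = some c := by
  induction i, hi using Nat.le_induction with
  | base => intro c h _; simpa [ttEntry] using h
  | succ i hi ih =>
    intro c' h hB
    rw [ttEntry_succ_iff _ _ _ _ hi] at h ⊢
    obtain ⟨c, h1, h2, h3, h4, h5⟩ := h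
    refine ⟨c, ih c h1 (fun i' x hx => hB i' x (by omega)), h2, h3, ?_, ?_⟩
    · rw [hB _ _ le_rfl, hB _ _ h2.le]; exact h4
    · intro x hx hx'
      rw [hB _ _ hx'.le, hB _ _ h2.le]; exact h5 x hx hx'

theorem ttEntry_pos (A : ℕ → ℕ → ℤ) (n i : ℕ) (hi : 1 ≤ i) :
    ∀ c, ttEntry A n i = some c → 1 ≤ c := by
  induction i, hi using Nat.le_induction with
  | base => intro c h; simp [ttEntry] at h; omega
  | succ i hi ih =>
    intro c' h
    rw [ttEntry_succ_iff _ _ _ _ hi] at h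
    obtain ⟨c, h1, h2, _⟩ := h
    omega

theorem reorient_sign {r n : ℕ} {A : ℕ → ℕ → ℤ} (hA : IsSignMatrix r n A) (S : Finset ℕ) :
    IsSignMatrix r n (reorient A S) := by
  intro i j h1 h2 h3 h4
  have := hA i j h1 h2 h3 h4
  unfold reorient
  split_ifs <;> omega

theorem local_block (r n i c : ℕ) (A : ℕ → ℕ → ℤ) (hA : IsSignMatrix r n A)
    (hi : 1 ≤ i) (hir : i + 1 ≤ r) (hc : 1 ≤ c) (hcn : c + 3 ≤ n) :
    ∃ (S : Finset ℕ) (c₁ c₂ : ℕ), c < c₁ ∧ c₁ < c₂ ∧ c₂ ≤ c + 3 ∧ S ⊆ Finset.Ioc c c₂ ∧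
      S.card ≤ 1 ∧ reorient A S i c₁ ≠ reorient A S i c ∧
      (∀ x, c < x → x < c₁ → reorient A S i x = reorient A S i c) ∧
      reorient A S (i + 1) c₂ ≠ reorient A S (i + 1) c₁ ∧
      (∀ x, c₁ < x → x < c₂ → reorient A S (i + 1) x = reorient A S (i + 1) c₁) := by
  have a0 := hA i c hi (by omega) (by omega) (by omega)
  have a1 := hA i (c + 1) hi (by omega) (by omega) (by omega)
  have a2 := hA i (c + 2) hi (by omega) (by omega) (by omega)
  have b1 := hA (i + 1) (c + 1) (by omega) (by omega) (by omega) (by omega)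
  have b2 := hA (i + 1) (c + 2) (by omega) (by omega) (by omega) (by omega)
  have b3 := hA (i + 1) (c + 3) (by omega) (by omega) (by omega) (by omega)
  generalize hP : (∃ (S : Finset ℕ) (c₁ c₂ : ℕ), _) = P
  have s12 : ∀ S : Finset ℕ, S ⊆ Finset.Ioc c (c + 2) → S.card ≤ 1 →
      reorient A S i (c + 1) ≠ reorient A S i c →
      reorient A S (i + 1) (c + 2) ≠ reorient A S (i + 1) (c + 1) → P :=
    fun S h1 h2 h3 h4 => hP ▸ ⟨S, c + 1, c + 2, by omega, by omega, by omega, h1, h2, h3,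
      fun x _ _ => by omega, h4, fun x _ _ => by omega⟩
  have s13 : ∀ S : Finset ℕ, S ⊆ Finset.Ioc c (c + 3) → S.card ≤ 1 →
      reorient A S i (c + 1) ≠ reorient A S i c →
      reorient A S (i + 1) (c + 2) = reorient A S (i + 1) (c + 1) →
      reorient A S (i + 1) (c + 3) ≠ reorient A S (i + 1) (c + 1) → P :=
    fun S h1 h2 h3 h4 h5 => hP ▸ ⟨S, c + 1, c + 3, by omega, by omega, by omega, h1, h2, h3,
      fun x _ _ => by omega, h5, fun x _ _ => by
        obtain rfl : x = c + 2 := by omega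
        exact h4⟩
  have s23 : ∀ S : Finset ℕ, S ⊆ Finset.Ioc c (c + 3) → S.card ≤ 1 →
      reorient A S i (c + 1) = reorient A S i c →
      reorient A S i (c + 2) ≠ reorient A S i c →
      reorient A S (i + 1) (c + 3) ≠ reorient A S (i + 1) (c + 2) → P :=
    fun S h1 h2 h3 h4 h5 => hP ▸ ⟨S, c + 2, c + 3, by omega, by omega, by omega, h1, h2, h4,
      fun x _ _ => by
        obtain rfl : x = c + 1 := by omega
        exact h3, h5, fun x _ _ => by omega⟩
  by_cases h1 : A i (c + 1) = A i c
  · by_cases h2 : A (i + 1) (c + 2) = A (i + 1) (c + 1)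
    · exact s12 {c + 1} (by simp) (by simp) (by simp [reorient]; omega) (by simp [reorient]; omega)
    by_cases h3 : A (i + 1) (c + 3) = A (i + 1) (c + 1)
    · exact s13 {c + 1} (by simp) (by simp) (by simp [reorient]; omega)
        (by simp [reorient]; omega) (by simp [reorient]; omega)
    by_cases h4 : A i (c + 2) = A i c
    · exact s23 {c + 2} (by simp) (by simp) (by simp [reorient]; omega)
        (by simp [reorient]; omega) (by simp [reorient]; omega)
    · exact s23 {c + 3} (by simp) (by simp) (by simp [reorient]; omega)
        (by simp [reorient]; omega) (by simp [reorient]; omega)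
  · by_cases h2 : A (i + 1) (c + 2) = A (i + 1) (c + 1)
    · exact s12 {c + 2} (by simp) (by simp) (by simp [reorient]; omega) (by simp [reorient]; omega)
    · exact s12 ∅ (by simp) (by simp) (by simp [reorient]; omega) (by simp [reorient]; omega)

theorem main_ind (r n k : ℕ) : ∀ (A : ℕ → ℕ → ℤ) (i c : ℕ), IsSignMatrix r n A → 1 ≤ i →
    i + 2 * k ≤ r + 1 → c + 3 * k ≤ n → ttEntry A n i = some c →
    ∃ S ⊆ Finset.Ioc c n, S.card ≤ k ∧ (ttEntry (reorient A S) n (i + 2 * k)).isSome := by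
  induction k with
  | zero =>
    intro A i c hA hi hir hcn h
    refine ⟨∅, by simp, by simp, ?_⟩
    have : reorient A ∅ = A := by funext i j; simp [reorient]
    rw [this]; simp [h]
  | succ k ih =>
    intro A i c hA hi hir hcn h
    have hc := ttEntry_pos A n i hi c h
    obtain ⟨S, c₁, c₂, h1, h2, h3, hS, hcard, g1, g2, g3, g4⟩ :=
      local_block r n i c A hA hi (by omega) hc (by omega)
    have e0 : ttEntry (reorient A S) n i = some c := by
      apply ttEntry_congr A _ n i hi c h
      intro i' x hx
      have : x ∉ S := fun hx' => by have := Finset.mem_Ioc.1 (hS hx'); omega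
      simp [reorient, this]
    have e1 : ttEntry (reorient A S) n (i + 1) = some c₁ :=
      (ttEntry_succ_iff _ _ _ _ hi).2 ⟨c, e0, h1, by omega, g1, g2⟩
    have e2 : ttEntry (reorient A S) n (i + 1 + 1) = some c₂ :=
      (ttEntry_succ_iff _ _ _ _ (by omega)).2 ⟨c₁, e1, h2, by omega, g3, g4⟩
    obtain ⟨T, hT, hTc, hTs⟩ := ih (reorient A S) (i + 1 + 1) c₂ (reorient_sign hA S) (by omega)
      (by omega) (by omega) e2
    refine ⟨S ∪ T, ?_, ?_, ?_⟩
    · intro x hx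
      rcases Finset.mem_union.1 hx with hx | hx
      · have := Finset.mem_Ioc.1 (hS hx); exact Finset.mem_Ioc.2 (by omega)
      · have := Finset.mem_Ioc.1 (hT hx); exact Finset.mem_Ioc.2 (by omega)
    · have := Finset.card_union_le S T; omega
    · have : reorient A (S ∪ T) = reorient (reorient A S) T := by
        funext i j
        by_cases hs : j ∈ S <;> by_cases ht : j ∈ T
        · have := Finset.mem_Ioc.1 (hS hs)
          have := Finset.mem_Ioc.1 (hT ht)
          omega
        all_goals simp [reorient, hs, ht]
      rw [this, show i + 2 * (k + 1) = i + 1 + 1 + 2 * k by ring]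
      exact hTs

/-- Earlier entries: all columns of the travel up to row `i` are counted by `i - 1`. -/
theorem entry_before (A : ℕ → ℕ → ℤ) (n i : ℕ) (hi : 1 ≤ i) :
    ∀ c, ttEntry A n i = some c → ∀ m, 1 ≤ m → m ≤ i →
      ∃ d, ttEntry A n m = some d ∧ d ≤ c ∧ (m < i → d < c) := by
  induction i, hi using Nat.le_induction with
  | base => intro c h m h1 h2; obtain rfl : m = 1 := by omega
            exact ⟨c, h, le_rfl, by omega⟩
  | succ i hi ih =>
    intro c' h m h1 h2
    rcases Nat.lt_or_ge i m with hm | hm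
    · obtain rfl : m = i + 1 := by omega
      exact ⟨c', h, le_rfl, by omega⟩
    · obtain ⟨c, g1, g2, _⟩ := (ttEntry_succ_iff _ _ _ _ hi).1 h
      obtain ⟨d, e1, e2, _⟩ := ih c g1 m h1 hm
      exact ⟨d, e1, by omega, by omega⟩

theorem filter_card (A : ℕ → ℕ → ℤ) (n : ℕ) (D : Finset ℕ) (hF : ttFollows A n D) (i j : ℕ)
    (hi : 2 ≤ i) (hiD : i ≤ D.card + 1) (h : ttEntry A n i = some j) :
    (D.filter (fun c => c ≤ j)).card = i - 1 := by
  have key : D.filter (fun c => c ≤ j) =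
      (Finset.Icc 2 i).image (fun m => (ttEntry A n m).getD 0) := by
    ext x
    simp only [Finset.mem_filter, Finset.mem_image, Finset.mem_Icc]
    constructor
    · rintro ⟨hx, hxj⟩
      obtain ⟨m, h1, h2, h3⟩ := (hF.2 x).1 hx
      refine ⟨m, ⟨h1, ?_⟩, by simp [h3]⟩
      by_contra hlt
      obtain ⟨d, e1, e2, e3⟩ := entry_before A n m (by omega) x h3 i (by omega) (by omega)
      rw [h] at e1
      cases e1
      have := e3 (by omega)
      omega
    · rintro ⟨m, ⟨h1, h2⟩, h3⟩
      obtain ⟨d, e1, e2, e3⟩ := entry_before A n i (by omega) j h m (by omega) h2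
      rw [e1] at h3
      simp at h3
      subst h3
      exact ⟨(hF.2 d).2 ⟨m, h1, by omega, e1⟩, e2⟩
  rw [key, Finset.card_image_of_injOn]
  · simp
  · have hlt : ∀ a b, 2 ≤ a → a < b → b ≤ i →
        (ttEntry A n a).getD 0 < (ttEntry A n b).getD 0 := by
      intro a b ha hab hb
      obtain ⟨d, e1, _, _⟩ := entry_before A n i (by omega) j h b (by omega) hb
      obtain ⟨d', e1', _, e3⟩ := entry_before A n b (by omega) d e1 a (by omega) hab.le
      simpa [e1, e1'] using e3 hab
    intro a ha b hb hab
    simp only [Finset.coe_Icc, Set.mem_Icc] at ha hb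
    simp only at hab
    rcases lt_trichotomy a b with hh | hh | hh
    · have := hlt a b ha.1 hh hb.2; omega
    · exact hh
    · have := hlt b a hb.1 hh ha.2; omega

/-- Let `k ≥ 1`, `r ≥ 2k+1`, `n ≥ 3k+1`, `A` an `r × n` sign matrix and `P` a
plain travel of `A` (with downward-move columns `D`).  If `P` makes a downward move from row
`r-2k` to row `r-2k+1` at a column `j ≤ n-3k` (i.e. `j` is the `(r-2k)`-th smallest element
of `D`), then `P` is not `k`-neighborly. -/
theorem statement_4 (k r n : ℕ) (hk : 1 ≤ k) (hr : 2 * k + 1 ≤ r) (hn : 3 * k + 1 ≤ n)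
    (A : ℕ → ℕ → ℤ) (hA : IsSignMatrix r n A)
    (D : Finset ℕ) (hD : IsPlainTravel r n D)
    (j : ℕ) (hjD : j ∈ D) (hrow : (D.filter (fun c => c ≤ j)).card = r - 2 * k)
    (hj : j ≤ n - 3 * k) :
    ¬ IsNeighborlyTravel A r n k D := by
  rintro ⟨R, hR, hF, hN⟩
  obtain ⟨i, h1, h2, h3⟩ := (hF.2 j).1 hjD
  have hcard := filter_card _ n D hF i j h1 h2 h3
  obtain ⟨S, hS, hSc, hSs⟩ := main_ind r n k (reorient A R) i j (reorient_sign hA R) (by omega)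
    (by omega) (by omega) h3
  refine hN S ?_ hSc ?_
  · intro x hx
    have := Finset.mem_Ioc.1 (hS hx)
    exact Finset.mem_Icc.2 (by omega)
  · unfold ttPositive
    rw [show r + 1 = i + 2 * k by omega]
    exact hSs
end

section
/- Let k ≥ 1, r = 2k+1 and n ≥ r+2 be integers. Then every r×n sign matrix has at most one k-neighborly plain travel. -/
theorem rowChange_of_change (B : ℕ → ℕ → ℤ) (n i e c' : ℕ) (h1 : e < c') (h2 : c' ≤ n)
    (h3 : B i c' ≠ B i e) : ∃ d, rowChange B n i e = some d ∧ d ≤ c' := by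
  unfold rowChange
  cases h : (List.range (n + 1)).find? (fun c' => decide (e < c' ∧ B i c' ≠ B i e)) with
  | none =>
    exfalso
    rw [List.find?_eq_none] at h
    have := h c' (by simp; omega)
    simp [h1, h3] at this
  | some d =>
    refine ⟨d, rfl, ?_⟩
    by_contra hlt
    rw [List.find?_range_eq_some] at h
    have := h.2.2 c' (by omega)
    simp [h1, h3] at this

theorem greedy (B : ℕ → ℕ → ℤ) (n r : ℕ) (c : ℕ → ℕ) (h0 : 1 ≤ c 0)
    (hc : ∀ i, i < r → c i < c (i + 1)) (hn : ∀ i, i ≤ r → c i ≤ n)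
    (hB : ∀ i, i < r → B (i + 1) (c i) ≠ B (i + 1) (c (i + 1))) :
    ∀ i, i ≤ r → ∃ e, ttEntry B n (i + 1) = some e ∧ e ≤ c i := by
  intro i
  induction i with
  | zero => intro _; exact ⟨1, rfl, h0⟩
  | succ i ih =>
    intro hi
    obtain ⟨e, he, hle⟩ := ih (by omega)
    have hci := hc i (by omega)
    have hBi := hB i (by omega)
    have hni := hn (i + 1) hi
    have key : ∃ d, rowChange B n (i + 1) e = some d ∧ d ≤ c (i + 1) := by
      by_cases h : B (i + 1) (c (i + 1)) = B (i + 1) e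
      · have h' : B (i + 1) (c i) ≠ B (i + 1) e := fun h2 => hBi (h2.trans h.symm)
        have hne : e ≠ c i := by rintro rfl; exact h' rfl
        obtain ⟨d, hd, hd'⟩ := rowChange_of_change B n (i + 1) e (c i) (by omega) (by omega) h'
        exact ⟨d, hd, by omega⟩
      · exact rowChange_of_change B n (i + 1) e (c (i + 1)) (by omega) hni h
    obtain ⟨d, hd, hd'⟩ := key
    exact ⟨d, by simp [ttEntry, he, hd], hd'⟩

theorem neg_count (B : ℕ → ℕ → ℤ) (n r k : ℕ) (hN : IsNeighborly B r n k) (c : ℕ → ℕ)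
    (h0 : 1 ≤ c 0) (hc : ∀ i, i < r → c i < c (i + 1)) (hn : ∀ i, i ≤ r → c i ≤ n)
    (hinj : Set.InjOn c (Finset.range (r + 1))) (hpos : ∀ i, i ≤ r → 1 ≤ c i)
    (Y : ℕ → ℤ) (hY : ∀ i, Y i = 1 ∨ Y i = -1)
    (hBne : ∀ i, i < r → B (i + 1) (c i) ≠ 0)
    (hYB : ∀ i, i < r → Y i * B (i + 1) (c i) = - (Y (i + 1) * B (i + 1) (c (i + 1)))) :
    k + 1 ≤ ((Finset.range (r + 1)).filter (fun i => Y i = -1)).card := by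
  by_contra hlt
  set S := ((Finset.range (r + 1)).filter (fun i => Y i = -1)).image c with hS
  have hre : ∀ l i, i ≤ r → reorient B S l (c i) = Y i * B l (c i) := by
    intro l i hi
    have hmem : c i ∈ S ↔ Y i = -1 := by
      rw [hS, Finset.mem_image]
      constructor
      · rintro ⟨j, hj, hji⟩
        rw [Finset.mem_filter] at hj
        have : j = i := hinj (by simpa using hj.1) (by simp; omega) hji
        rw [← this]; exact hj.2
      · intro h
        exact ⟨i, by simp [h]; omega, rfl⟩
    unfold reorient
    rcases hY i with h | h
    · have : c i ∉ S := by rw [hmem, h]; norm_num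
      simp [this, h]
    · have : c i ∈ S := by rw [hmem, h]
      simp [this, h]
  refine hN S ?_ ?_ ?_
  · intro x hx
    rw [hS, Finset.mem_image] at hx
    obtain ⟨j, hj, rfl⟩ := hx
    rw [Finset.mem_filter, Finset.mem_range] at hj
    rw [Finset.mem_Icc]
    exact ⟨hpos j (by omega), hn j (by omega)⟩
  · have := Finset.card_image_le (s := (Finset.range (r + 1)).filter (fun i => Y i = -1)) (f := c)
    rw [← hS] at this
    omega
  · obtain ⟨e, he, -⟩ := greedy (reorient B S) n r c h0 hc hn (by
      intro i hi
      rw [hre _ i (by omega), hre _ (i + 1) (by omega)]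
      have h1 := hYB i hi
      have h2 := hBne i hi
      have h3 : Y i * B (i + 1) (c i) ≠ 0 := by
        refine mul_ne_zero ?_ h2
        rcases hY i with h | h <;> rw [h] <;> norm_num
      omega) r le_rfl
    unfold ttPositive
    rw [he]; rfl

theorem prod_eq (B : ℕ → ℕ → ℤ) (n k : ℕ) (hN : IsNeighborly B (2 * k + 1) n k) (c : ℕ → ℕ)
    (h0 : 1 ≤ c 0) (hc : ∀ i, i < 2 * k + 1 → c i < c (i + 1)) (hn : ∀ i, i ≤ 2 * k + 1 → c i ≤ n)
    (hinj : Set.InjOn c (Finset.range (2 * k + 1 + 1))) (hpos : ∀ i, i ≤ 2 * k + 1 → 1 ≤ c i)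
    (Y : ℕ → ℤ) (hY : ∀ i, Y i = 1 ∨ Y i = -1)
    (hBne : ∀ i, i < 2 * k + 1 → B (i + 1) (c i) ≠ 0)
    (hYB : ∀ i, i < 2 * k + 1 → Y i * B (i + 1) (c i) = - (Y (i + 1) * B (i + 1) (c (i + 1)))) :
    ∏ i ∈ Finset.range (2 * k + 1 + 1), Y i = (-1) ^ (k + 1) := by
  have h1 := neg_count B n _ k hN c h0 hc hn hinj hpos Y hY hBne hYB
  have h2 := neg_count B n _ k hN c h0 hc hn hinj hpos (fun i => - Y i)
    (by intro i; rcases hY i with h | h <;> simp [h]) hBne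
    (by intro i hi; have := hYB i hi; simp only [neg_mul]; omega)
  have h3 := Finset.card_filter_add_card_filter_not (s := Finset.range (2 * k + 1 + 1))
    (fun i => Y i = -1)
  have h4 : (Finset.range (2 * k + 1 + 1)).filter (fun i => - Y i = -1)
      = (Finset.range (2 * k + 1 + 1)).filter (fun i => ¬ Y i = -1) := by
    apply Finset.filter_congr
    intro i _
    rcases hY i with h | h <;> simp [h]
  rw [h4] at h2
  rw [Finset.card_range] at h3
  have h5 : ((Finset.range (2 * k + 1 + 1)).filter (fun i => Y i = -1)).card = k + 1 := by omega
  have h6 : ∀ i ∈ Finset.range (2 * k + 1 + 1), Y i = if Y i = -1 then -1 else 1 := by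
    intro i _
    rcases hY i with h | h <;> simp [h]
  rw [Finset.prod_congr rfl h6, Finset.prod_ite]
  simp [h5]

def altSign (A : ℕ → ℕ → ℤ) (c : ℕ → ℕ) : ℕ → ℤ
  | 0 => 1
  | i + 1 => if altSign A c i * A (i + 1) (c i) = - A (i + 1) (c (i + 1)) then 1 else -1

def colSign (R : Finset ℕ) (j : ℕ) : ℤ := if j ∈ R then -1 else 1

theorem colSign_or (R : Finset ℕ) (j : ℕ) : colSign R j = 1 ∨ colSign R j = -1 := by
  unfold colSign; split_ifs <;> simp

theorem colSign_sq (R : Finset ℕ) (j : ℕ) : colSign R j * colSign R j = 1 := by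
  rcases colSign_or R j with h | h <;> simp [h]

theorem reorient_eq (A : ℕ → ℕ → ℤ) (R : Finset ℕ) (i j : ℕ) :
    reorient A R i j = colSign R j * A i j := by
  unfold reorient colSign; split_ifs <;> simp

theorem altSign_or (A : ℕ → ℕ → ℤ) (c : ℕ → ℕ) (i : ℕ) : altSign A c i = 1 ∨ altSign A c i = -1 := by
  cases i with
  | zero => simp [altSign]
  | succ i => unfold altSign; split_ifs <;> simp

theorem colProd (k n : ℕ) (A : ℕ → ℕ → ℤ) (hA : IsSignMatrix (2 * k + 1) n A) (R : Finset ℕ)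
    (hN : IsNeighborly (reorient A R) (2 * k + 1) n k) (c : ℕ → ℕ)
    (hc : ∀ i, i < 2 * k + 1 → c i < c (i + 1)) (hn : ∀ i, i ≤ 2 * k + 1 → c i ≤ n)
    (hinj : Set.InjOn c (Finset.range (2 * k + 1 + 1))) (hpos : ∀ i, i ≤ 2 * k + 1 → 1 ≤ c i) :
    (∏ i ∈ Finset.range (2 * k + 1 + 1), colSign R (c i)) *
      ∏ i ∈ Finset.range (2 * k + 1 + 1), altSign A c i = (-1) ^ (k + 1) := by
  rw [← Finset.prod_mul_distrib]
  apply prod_eq (reorient A R) n k hN c (hpos 0 (by omega)) hc hn hinj hpos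
  · intro i
    rcases colSign_or R (c i) with h | h <;> rcases altSign_or A c i with h' | h' <;> simp [h, h']
  · intro i hi
    rw [reorient_eq]
    rcases colSign_or R (c i) with h | h <;>
    rcases hA (i + 1) (c i) (by omega) (by omega) (hpos i (by omega)) (hn i (by omega)) with h' | h' <;>
      simp [h, h']
  · intro i hi
    rw [reorient_eq, reorient_eq]
    have e1 : colSign R (c i) * altSign A c i * (colSign R (c i) * A (i + 1) (c i))
        = altSign A c i * A (i + 1) (c i) := by
      linear_combination (altSign A c i * A (i + 1) (c i)) * colSign_sq R (c i)
    have e2 : colSign R (c (i + 1)) * altSign A c (i + 1) *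
          (colSign R (c (i + 1)) * A (i + 1) (c (i + 1)))
        = altSign A c (i + 1) * A (i + 1) (c (i + 1)) := by
      linear_combination (altSign A c (i + 1) * A (i + 1) (c (i + 1))) * colSign_sq R (c (i + 1))
    rw [e1, e2, altSign]
    rcases hA (i + 1) (c i) (by omega) (by omega) (hpos i (by omega)) (hn i (by omega)) with h | h <;>
    rcases hA (i + 1) (c (i + 1)) (by omega) (by omega) (hpos (i + 1) (by omega))
      (hn (i + 1) (by omega)) with h' | h' <;>
    rcases altSign_or A c i with h2 | h2 <;> simp [h, h', h2]

theorem setProd (k n : ℕ) (A : ℕ → ℕ → ℤ) (hA : IsSignMatrix (2 * k + 1) n A) (R₁ R₂ : Finset ℕ)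
    (hN₁ : IsNeighborly (reorient A R₁) (2 * k + 1) n k)
    (hN₂ : IsNeighborly (reorient A R₂) (2 * k + 1) n k)
    (C : Finset ℕ) (hC : C ⊆ Finset.Icc 1 n) (hcard : C.card = 2 * k + 1 + 1) :
    ∏ j ∈ C, colSign R₁ j = ∏ j ∈ C, colSign R₂ j := by
  set f := C.orderEmbOfFin hcard with hf
  set c : ℕ → ℕ := fun i => if h : i < 2 * k + 1 + 1 then f ⟨i, h⟩ else 0 with hcdef
  have hcv : ∀ i (h : i < 2 * k + 1 + 1), c i = f ⟨i, h⟩ := by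
    intro i h; rw [hcdef]; exact dif_pos h
  have hmem : ∀ i, i ≤ 2 * k + 1 → c i ∈ C := by
    intro i hi
    rw [hcv i (by omega)]
    exact Finset.orderEmbOfFin_mem C hcard _
  have hinj : Set.InjOn c (Finset.range (2 * k + 1 + 1)) := by
    intro i hi j hj hij
    simp only [Finset.coe_range, Set.mem_Iio] at hi hj
    rw [hcv i hi, hcv j hj] at hij
    simpa using f.injective hij
  have himg : (Finset.range (2 * k + 1 + 1)).image c = C := by
    apply Finset.eq_of_subset_of_card_le
    · intro x hx
      rw [Finset.mem_image] at hx
      obtain ⟨i, hi, rfl⟩ := hx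
      rw [Finset.mem_range] at hi
      exact hmem i (by omega)
    · rw [Finset.card_image_of_injOn hinj, hcard, Finset.card_range]
  have hmono : ∀ i, i < 2 * k + 1 → c i < c (i + 1) := by
    intro i hi
    rw [hcv i (by omega), hcv (i + 1) (by omega)]
    apply f.strictMono
    simp [Fin.lt_def]
  have hb : ∀ i, i ≤ 2 * k + 1 → 1 ≤ c i ∧ c i ≤ n := fun i hi => by
    simpa using hC (hmem i hi)
  have p1 := colProd k n A hA R₁ hN₁ c hmono (fun i hi => (hb i hi).2) hinj (fun i hi => (hb i hi).1)
  have p2 := colProd k n A hA R₂ hN₂ c hmono (fun i hi => (hb i hi).2) hinj (fun i hi => (hb i hi).1)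
  rw [← himg, Finset.prod_image hinj, Finset.prod_image hinj]
  refine mul_right_cancel₀ ?_ (p1.trans p2.symm)
  rw [Finset.prod_ne_zero_iff]
  intro i _
  rcases altSign_or A c i with h | h <;> rw [h] <;> norm_num

theorem const_ratio (k n : ℕ) (hn : 2 * k + 1 + 2 ≤ n)
    (A : ℕ → ℕ → ℤ) (hA : IsSignMatrix (2 * k + 1) n A) (R₁ R₂ : Finset ℕ)
    (hN₁ : IsNeighborly (reorient A R₁) (2 * k + 1) n k)
    (hN₂ : IsNeighborly (reorient A R₂) (2 * k + 1) n k)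
    (a b : ℕ) (ha : a ∈ Finset.Icc 1 n) (hb : b ∈ Finset.Icc 1 n) :
    colSign R₁ a * colSign R₂ a = colSign R₁ b * colSign R₂ b := by
  by_cases hab : a = b
  · rw [hab]
  have hc : 2 * k + 1 ≤ (((Finset.Icc 1 n).erase a).erase b).card := by
    rw [Finset.card_erase_of_mem (by simp only [Finset.mem_erase]; exact ⟨Ne.symm hab, hb⟩),
      Finset.card_erase_of_mem ha, Nat.card_Icc]
    omega
  obtain ⟨T, hT, hTc⟩ := Finset.exists_subset_card_eq hc
  have haT : a ∉ T := fun h => by simpa using hT h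
  have hbT : b ∉ T := fun h => by simpa using hT h
  have hTs : T ⊆ Finset.Icc 1 n := fun x hx =>
    Finset.mem_of_mem_erase (Finset.mem_of_mem_erase (hT hx))
  have pa := setProd k n A hA R₁ R₂ hN₁ hN₂ (insert a T)
    (Finset.insert_subset ha hTs) (by rw [Finset.card_insert_of_notMem haT, hTc])
  have pb := setProd k n A hA R₁ R₂ hN₁ hN₂ (insert b T)
    (Finset.insert_subset hb hTs) (by rw [Finset.card_insert_of_notMem hbT, hTc])
  rw [Finset.prod_insert haT, Finset.prod_insert haT] at pa
  rw [Finset.prod_insert hbT, Finset.prod_insert hbT] at pb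
  have hne : ∀ R : Finset ℕ, ∏ j ∈ T, colSign R j ≠ 0 := by
    intro R
    rw [Finset.prod_ne_zero_iff]
    intro i _
    rcases colSign_or R i with h | h <;> rw [h] <;> norm_num
  have h1 := hne R₁
  have h2 := hne R₂
  generalize ∏ j ∈ T, colSign R₁ j = P at *
  generalize ∏ j ∈ T, colSign R₂ j = Q at *
  rcases colSign_or R₁ a with h | h <;> rcases colSign_or R₂ a with h' | h' <;>
  rcases colSign_or R₁ b with g | g <;> rcases colSign_or R₂ b with g' | g' <;>
  rw [h, h'] at pa <;> rw [g, g'] at pb <;> rw [h, h', g, g'] <;> omega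

theorem ttEntry_congr_s8 (n : ℕ) (B₁ B₂ : ℕ → ℕ → ℤ) (s : ℤ) (hs : s ≠ 0)
    (h : ∀ i j, 1 ≤ j → j ≤ n → B₁ i j = s * B₂ i j) (hn : 1 ≤ n) (i : ℕ) :
    ttEntry B₁ n (i + 1) = ttEntry B₂ n (i + 1) ∧
      ∀ e, ttEntry B₁ n (i + 1) = some e → 1 ≤ e ∧ e ≤ n := by
  induction i with
  | zero =>
    refine ⟨rfl, ?_⟩
    intro e he
    simp [ttEntry] at he
    omega
  | succ i ih =>
    obtain ⟨h1, h2⟩ := ih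
    simp only [ttEntry]
    rw [← h1]
    cases he : ttEntry B₁ n (i + 1) with
    | none => simp
    | some e =>
      obtain ⟨l, u⟩ := h2 e he
      simp only [Option.bind_some]
      constructor
      · unfold rowChange
        apply List.find?_congr
        intro x hx
        rw [List.mem_range] at hx
        apply decide_eq_decide.mpr
        apply and_congr_right
        intro hex
        rw [h _ x (by omega) (by omega), h _ e l u]
        exact not_congr (mul_right_inj' hs)
      · intro d hd
        unfold rowChange at hd
        have hm := List.mem_of_find?_eq_some hd
        have hp := List.find?_some hd
        simp at hm hp
        omega

theorem ttEntry_none_mono (B : ℕ → ℕ → ℤ) (n m : ℕ) (h : ttEntry B n (m + 1) = none) (i : ℕ) :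
    ttEntry B n (m + i + 1) = none := by
  induction i with
  | zero => exact h
  | succ i ih => rw [← Nat.add_assoc]; simp [ttEntry, ih]

theorem ttFollows_mem (B : ℕ → ℕ → ℤ) (n : ℕ) (D : Finset ℕ) (h : ttFollows B n D) (c : ℕ) :
    c ∈ D ↔ ∃ i, ttEntry B n (i + 1 + 1) = some c := by
  rw [h.2 c]
  constructor
  · rintro ⟨i, h1, h2, h3⟩
    exact ⟨i - 2, by rwa [show i - 2 + 1 + 1 = i by omega]⟩
  · rintro ⟨i, hi⟩
    refine ⟨i + 1 + 1, by omega, ?_, hi⟩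
    by_contra hlt
    have := ttEntry_none_mono B n (D.card + 1) h.1 (i - D.card)
    rw [show D.card + 1 + (i - D.card) + 1 = i + 1 + 1 by omega, hi] at this
    simp at this

/-- For `k ≥ 1`, `r = 2k+1` and `n ≥ r+2`, every `r × n` sign matrix has at
most one `k`-neighborly plain travel. -/
theorem statement_8 (k n : ℕ) (hk : 1 ≤ k) (hn : 2 * k + 1 + 2 ≤ n)
    (A : ℕ → ℕ → ℤ) (hA : IsSignMatrix (2 * k + 1) n A) :
    ∀ D₁ D₂ : Finset ℕ,
      IsPlainTravel (2 * k + 1) n D₁ → IsNeighborlyTravel A (2 * k + 1) n k D₁ →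
      IsPlainTravel (2 * k + 1) n D₂ → IsNeighborlyTravel A (2 * k + 1) n k D₂ →
      D₁ = D₂ := by
  rintro D₁ D₂ - ⟨R₁, -, f₁, N₁⟩ - ⟨R₂, -, f₂, N₂⟩
  have hs : colSign R₁ 1 * colSign R₂ 1 ≠ 0 := by
    rcases colSign_or R₁ 1 with h | h <;> rcases colSign_or R₂ 1 with h' | h' <;> simp [h, h']
  have key := ttEntry_congr_s8 n (reorient A R₁) (reorient A R₂) _ hs (by
    intro i j h1 h2
    rw [reorient_eq, reorient_eq, const_ratio k n hn A hA R₁ R₂ N₁ N₂ 1 j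
      (by simp; omega) (by simp; omega)]
    linear_combination (-(colSign R₁ j * A i j)) * colSign_sq R₂ j) (by omega)
  ext c
  rw [ttFollows_mem _ n D₁ f₁, ttFollows_mem _ n D₂ f₂]
  simp only [(key _).1]
end
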